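/- Fix δ > 0 and ε > 0. Then there exist C > 0, η > 0 and n₀ such that for all n ≥ n₀ and all M, k with M/N ∈ [δ, 1−δ] and k/n ∈ [δ, 1−δ], with probability at least 1 − exp(−n^η) over G = G_{n,M} one has |Σ₁₁ − λ| ≤ C·λ·n^{−1/2+ε}, where Σ₁₁ = (2KK̄/(n²N²(n−2)(n−3)))·(M(N−M) + ((k−2)/(k̄−1))·N·V) and λ = ((n²−k²)k²/(2n⁴))·(M(N−M)/N²). -/

import Mathlib

/-!
Write `p = M / N`. The statement reduces to concentration of the degree variance: if
`V = 2 N p (1 - p) + O(n ^ (3/2 + ε))`, then a direct computation with rational functions gives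
`Σ₁₁ = λ + O(n ^ (-1/2 + ε))` (`sigma_close`), and `λ` is bounded below in terms of `δ`
(`lamP_ge`).

To control `V`, let `x e = 1_{e ∈ G} - p` be the centred edge indicators. When `G` has exactly `M`
edges, `V = ∑ v, (∑ e ∋ v, x e) ^ 2`, and the diagonal terms of the squares add up to exactly
`2 N p (1 - p)`. Fixing a ranking of the possible edges, the off-diagonal terms are
`2 ∑ e, x e * Y e`, where `Y e` is the sum of `x f` over edges `f` of smaller rank, weighted by the
number of endpoints shared with `e` (`Vdeg_eq`).

In the binomial random graph with edge probability `p`, the sum `∑ e, x e * Y e` is a martingale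
under edge exposure. Each `Y e` is a weighted sum of `O(n)` independent centred indicators, so with
overwhelming probability all `|Y e|` are at most `B = n ^ (1/2 + ε/2)`. After truncating `Y e` at `B`,
Azuma's inequality (`bernExp_tail`) bounds the sum by `n ^ (3/2 + ε)`. Both tails are of order
`exp (-n ^ ε / 8)`. Since `M` is the mode of `Bin(N, M/N)`, conditioning on `M` edges costs only a
factor `N + 1` (`PrGnM_ge`), so the polynomial losses are absorbed by the choice `η = ε / 2`.
-/

open Finset MeasureTheory ProbabilityTheory

noncomputable section

/-- Uniform probability of an event `P` over a finite sample space `Ω`. -/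
def Pru {α : Type*} (Ω : Finset α) (P : α → Prop) : ℝ := by
  classical exact ((Ω.filter P).card : ℝ) / Ω.card

/-- Expectation of `f` under the uniform distribution on `Ω`. -/
def Exu {α : Type*} (Ω : Finset α) (f : α → ℝ) : ℝ := (∑ a ∈ Ω, f a) / Ω.card

/-- Variance of `f` under the uniform distribution on `Ω`. -/
def Varu {α : Type*} (Ω : Finset α) (f : α → ℝ) : ℝ := Exu Ω (fun a => (f a - Exu Ω f) ^ 2)

/-- Conditional expectation of `f` given the value of `g`, under uniform distribution on `Ω`. -/
def condExpU {α β : Type*} (Ω : Finset α) (f : α → ℝ) (g : α → β) (ω : α) : ℝ := by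
  classical exact Exu (Ω.filter (fun ω' => g ω' = g ω)) f

/-- The edge set of the complete graph on `[n]`. -/
def completeEdges (n : ℕ) : Finset (Sym2 (Fin n)) := by
  classical exact Finset.univ.filter (fun e => ¬ e.IsDiag)

/-- A finset of `Sym2`s is a graph if it has no loops. -/
def IsGraph {n : ℕ} (G : Finset (Sym2 (Fin n))) : Prop := ∀ e ∈ G, ¬ e.IsDiag

/-- The sample space of `G_{n,M}`: all graphs on `[n]` with exactly `M` edges. -/
def graphsM (n M : ℕ) : Finset (Finset (Sym2 (Fin n))) := by
  classical exact (completeEdges n).powerset.filter (fun G => G.card = M)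

/-- `e(S)`: number of edges of `G` with both endpoints in `S`. -/
def edgesIn {n : ℕ} (G : Finset (Sym2 (Fin n))) (S : Finset (Fin n)) : ℕ := by
  classical exact (G.filter (fun e => ∀ v ∈ e, v ∈ S)).card

/-- `d_S(v)`: number of neighbours of `v` (in graph `G`) lying in `S`. -/
def dS {n : ℕ} (G : Finset (Sym2 (Fin n))) (S : Finset (Fin n)) (v : Fin n) : ℕ := by
  classical exact (S.filter (fun w => s(v, w) ∈ G)).card

/-- All `k`-element subsets of `[n]`. -/
def kSets (n k : ℕ) : Finset (Finset (Fin n)) := Finset.univ.powersetCard k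

/-- Probability of an event under the uniform random graph `G_{n,M}`. -/
def PrGnM (n M : ℕ) (P : Finset (Sym2 (Fin n)) → Prop) : ℝ := Pru (graphsM n M) P

/-- Probability of an event under the binomial random graph `G_{n,p}`. -/
def PrGnp (n : ℕ) (p : ℝ) (P : Finset (Sym2 (Fin n)) → Prop) : ℝ := by
  classical exact ∑ G ∈ (completeEdges n).powerset,
    if (P G) then p ^ G.card * (1 - p) ^ ((completeEdges n).card - G.card) else 0

/-- `N = n(n-1)/2` as a real number. -/
def Nr (n : ℕ) : ℝ := (n : ℝ) * ((n : ℝ) - 1) / 2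

/-- `K = k(k-1)/2` as a real number. -/
def Kr (k : ℕ) : ℝ := (k : ℝ) * ((k : ℝ) - 1) / 2

/-- `λ = ((n²-k²)k²/(2n⁴))·(M(N-M)/N²)`. -/
def lamP (n M k : ℕ) : ℝ :=
  (((n:ℝ)^2 - (k:ℝ)^2) * (k:ℝ)^2 / (2 * (n:ℝ)^4)) * ((M:ℝ) * (Nr n - (M:ℝ)) / (Nr n)^2)

/-- The mean `K·M/N`. -/
def muP (n M k : ℕ) : ℝ := Kr k * (M:ℝ) / Nr n

/-- `W = (e(S) - K·M/N)/n`. -/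
def Wfun (n M k : ℕ) (G : Finset (Sym2 (Fin n))) (S : Finset (Fin n)) : ℝ :=
  ((edgesIn G S : ℝ) - muP n M k) / n

/-- `V = Σ_v d(v)² - n·d(G)²`, i.e. `n` times the degree variance. -/
def Vdeg {n : ℕ} (G : Finset (Sym2 (Fin n))) : ℝ :=
  (∑ v : Fin n, (dS G Finset.univ v : ℝ) ^ 2) - (n:ℝ) * (2 * (G.card : ℝ) / n) ^ 2

/-- Gaussian CDF with mean `m` and variance `v`. -/
def gaussCdf (m v z : ℝ) : ℝ := ((gaussianReal m v.toNNReal) (Set.Iic z)).toReal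

/-- Gaussian measure of a set, mean `m`, variance `v`. -/
def gaussMeas (m v : ℝ) (A : Set ℝ) : ℝ := ((gaussianReal m v.toNNReal) A).toReal

/-- Gaussian density with mean `m` and variance `v`. -/
def gaussPdf (m v x : ℝ) : ℝ := gaussianPDFReal m v.toNNReal x

/-- `P(Y ∈ ·)` for `Y ~ Bin(ν, p)`. -/
def binomPr (ν : ℕ) (p : ℝ) (P : ℕ → Prop) : ℝ := by
  classical exact ∑ j ∈ Finset.range (ν + 1),
    if (P j) then (ν.choose j : ℝ) * p ^ j * (1 - p) ^ (ν - j) else 0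

/-- Sample space for "uniform `k`-set `S`, then uniform `x ∈ S` and `x̄ ∈ S̄`". -/
def SwapΩ (n k : ℕ) : Finset (Σ _ : Finset (Fin n), Fin n × Fin n) :=
  (kSets n k).sigma (fun S => S ×ˢ Sᶜ)

/-- A triple `(a, r, t)` is valid for `β`. -/
def ValidTriple (β : ℝ) (n a r t : ℕ) : Prop :=
  a ≤ r ∧
  (∃ c : ℝ, 1/2 ≤ c ∧ c ≤ 1 ∧ (a : ℝ) = c * (t:ℝ) ^ ((3:ℝ)/2) * (n:ℝ) ^ (2*β - 1/2)) ∧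
  (r : ℝ) ≤ (n:ℝ) ^ (-β) * Real.sqrt ((n:ℝ) * (t:ℝ))

/-! ### Azuma inequality for independent random subsets -/

section BernoulliSubsets

variable {α : Type*}

/-- Expectation of `F` over the random subset of `A` that contains each element independently
with probability `p`. -/
def bernExp (p : ℝ) (A : Finset α) (F : Finset α → ℝ) : ℝ :=
  ∑ G ∈ A.powerset, p ^ #G * (1 - p) ^ (#A - #G) * F G

lemma bernExp_mono {p : ℝ} (h0 : 0 ≤ p) (h1 : p ≤ 1) {A : Finset α} {F F' : Finset α → ℝ}
    (h : ∀ G ⊆ A, F G ≤ F' G) : bernExp p A F ≤ bernExp p A F' := by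
  unfold bernExp
  refine Finset.sum_le_sum fun G hG => ?_
  have : 0 ≤ 1 - p := by linarith
  have := h G (Finset.mem_powerset.1 hG)
  gcongr

lemma bernExp_mul_const (p c : ℝ) (A : Finset α) (F : Finset α → ℝ) :
    bernExp p A (fun G => F G * c) = bernExp p A F * c := by
  unfold bernExp
  rw [Finset.sum_mul]
  exact Finset.sum_congr rfl fun G _ => by ring

lemma bernExp_add (p : ℝ) (A : Finset α) (F F' : Finset α → ℝ) :
    bernExp p A (fun G => F G + F' G) = bernExp p A F + bernExp p A F' := by
  unfold bernExp
  rw [← Finset.sum_add_distrib]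
  exact Finset.sum_congr rfl fun G _ => by ring

lemma bernExp_sum {ι : Type*} (p : ℝ) (A : Finset α) (s : Finset ι) (F : ι → Finset α → ℝ) :
    bernExp p A (fun G => ∑ i ∈ s, F i G) = ∑ i ∈ s, bernExp p A (F i) := by
  unfold bernExp
  rw [Finset.sum_comm]
  exact Finset.sum_congr rfl fun G _ => by rw [Finset.mul_sum]

/-- A Hoeffding bound for a centred Bernoulli variable. Multiplying by the moment generating
function at `-t`, which is at least `1`, symmetrizes the variable. -/
lemma bernoulli_mgf_le {p : ℝ} (h0 : 0 ≤ p) (h1 : p ≤ 1) (t : ℝ) :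
    (1 - p) * Real.exp (-(p * t)) + p * Real.exp ((1 - p) * t) ≤ Real.exp (t ^ 2 / 2) := by
  have hq : 0 ≤ 1 - p := by linarith
  set X := (1 - p) * Real.exp (-(p * t)) + p * Real.exp ((1 - p) * t) with hX
  have hX0 : 0 ≤ X := by positivity
  have hY : 1 ≤ (1 - p) * Real.exp (p * t) + p * Real.exp (-((1 - p) * t)) := by
    have e1 := mul_le_mul_of_nonneg_left (Real.add_one_le_exp (p * t)) hq
    have e2 := mul_le_mul_of_nonneg_left (Real.add_one_le_exp (-((1 - p) * t))) h0
    nlinarith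
  have hXY : X * ((1 - p) * Real.exp (p * t) + p * Real.exp (-((1 - p) * t))) =
      1 - 2 * (p * (1 - p)) + 2 * (p * (1 - p)) * Real.cosh t := by
    have a1 : Real.exp (-(p * t)) * Real.exp (p * t) = 1 := by
      rw [← Real.exp_add]; simp
    have a2 : Real.exp ((1 - p) * t) * Real.exp (-((1 - p) * t)) = 1 := by
      rw [← Real.exp_add]; simp
    have a3 : Real.exp (-(p * t)) * Real.exp (-((1 - p) * t)) = Real.exp (-t) := by
      rw [← Real.exp_add]; ring_nf
    have a4 : Real.exp ((1 - p) * t) * Real.exp (p * t) = Real.exp t := by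
      rw [← Real.exp_add]; ring_nf
    rw [hX, Real.cosh_eq]
    linear_combination (1 - p) ^ 2 * a1 + p ^ 2 * a2 + (1 - p) * p * a3 + p * (1 - p) * a4
  have hpq : 2 * (p * (1 - p)) ≤ 1 := by nlinarith [sq_nonneg (2 * p - 1)]
  have hc := Real.one_le_cosh t
  calc X ≤ X * ((1 - p) * Real.exp (p * t) + p * Real.exp (-((1 - p) * t))) :=
        le_mul_of_one_le_right hX0 hY
    _ ≤ Real.cosh t := by rw [hXY]; nlinarith
    _ ≤ _ := Real.cosh_le_exp_half_sq t

variable [DecidableEq α]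

/-- The centred indicator of the event `a ∈ G`. -/
def cInd (p : ℝ) (G : Finset α) (a : α) : ℝ := (if a ∈ G then 1 else 0) - p

lemma bernExp_insert (p : ℝ) {A : Finset α} {a : α} (ha : a ∉ A) (F : Finset α → ℝ) :
    bernExp p (insert a A) F =
      bernExp p A (fun G => (1 - p) * F G + p * F (insert a G)) := by
  unfold bernExp
  rw [Finset.sum_powerset_insert ha, ← Finset.sum_add_distrib]
  refine Finset.sum_congr rfl fun G hG => ?_
  have hGA := Finset.mem_powerset.1 hG
  have haG : a ∉ G := fun h => ha (hGA h)
  have hc := Finset.card_le_card hGA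
  rw [Finset.card_insert_of_notMem ha, Finset.card_insert_of_notMem haG,
    show #A + 1 - (#G + 1) = #A - #G by omega, show #A + 1 - #G = (#A - #G) + 1 by omega]
  ring

/-- Exponential-moment form of Azuma's inequality. The elements of `A` are revealed in increasing
order of `r`, and `hpred` says that the coefficient `Y a` does not depend on elements
revealed at or after `a`. -/
lemma bernExp_exp_le {p : ℝ} (h0 : 0 ≤ p) (h1 : p ≤ 1) (r : α → ℕ)
    (Y : α → Finset α → ℝ) (B : α → ℝ) (hB : ∀ a G, |Y a G| ≤ B a)
    (hpred : ∀ a b G, r a ≤ r b → Y a (insert b G) = Y a G) (s : ℝ) (A : Finset α) :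
    bernExp p A (fun G => Real.exp (s * ∑ a ∈ A, cInd p G a * Y a G)) ≤
      Real.exp (s ^ 2 * (∑ a ∈ A, B a ^ 2) / 2) := by
  induction A using Finset.induction_on_max_value r with
  | empty => simp [bernExp]
  | insert a A ha hmax ih =>
    rw [bernExp_insert p ha, Finset.sum_insert ha]
    have key : ∀ G ⊆ A,
        (1 - p) * Real.exp (s * ∑ b ∈ insert a A, cInd p G b * Y b G) +
          p * Real.exp (s * ∑ b ∈ insert a A, cInd p (insert a G) b * Y b (insert a G)) ≤
        Real.exp (s * ∑ b ∈ A, cInd p G b * Y b G) * Real.exp (s ^ 2 * B a ^ 2 / 2) := by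
      intro G hG
      have haG : a ∉ G := fun h => ha (hG h)
      have hsum : ∑ b ∈ A, cInd p (insert a G) b * Y b (insert a G) =
          ∑ b ∈ A, cInd p G b * Y b G := by
        refine Finset.sum_congr rfl fun b hb => ?_
        have hba : b ≠ a := fun h => ha (h ▸ hb)
        rw [hpred b a G (hmax b hb)]
        simp [cInd, hba]
      rw [Finset.sum_insert ha, Finset.sum_insert ha, hsum, hpred a a G le_rfl]
      have c1 : cInd p G a = -p := by simp [cInd, haG]
      have c2 : cInd p (insert a G) a = 1 - p := by simp [cInd]
      rw [c1, c2]
      set T := ∑ b ∈ A, cInd p G b * Y b G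
      have m := bernoulli_mgf_le h0 h1 (s * Y a G)
      have hYB : Real.exp ((s * Y a G) ^ 2 / 2) ≤ Real.exp (s ^ 2 * B a ^ 2 / 2) := by
        have := sq_le_sq' (abs_le.1 (hB a G)).1 (abs_le.1 (hB a G)).2
        rw [mul_pow]
        gcongr
      have f1 : Real.exp (s * (-p * Y a G + T)) =
          Real.exp (s * T) * Real.exp (-(p * (s * Y a G))) := by
        rw [← Real.exp_add]; ring_nf
      have f2 : Real.exp (s * ((1 - p) * Y a G + T)) =
          Real.exp (s * T) * Real.exp ((1 - p) * (s * Y a G)) := by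
        rw [← Real.exp_add]; ring_nf
      rw [f1, f2]
      calc _ = Real.exp (s * T) * ((1 - p) * Real.exp (-(p * (s * Y a G))) +
            p * Real.exp ((1 - p) * (s * Y a G))) := by ring
        _ ≤ _ := by gcongr; exact m.trans hYB
    refine (bernExp_mono h0 h1 key).trans ?_
    rw [bernExp_mul_const]
    calc _ ≤ Real.exp (s ^ 2 * (∑ a ∈ A, B a ^ 2) / 2) * Real.exp (s ^ 2 * B a ^ 2 / 2) := by
          gcongr
      _ = _ := by rw [← Real.exp_add]; ring_nf

/-- Azuma's inequality for `∑ a ∈ A, (1_{a ∈ G} - p) * Y a G` with predictable bounded `Y`. -/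
lemma bernExp_tail {p : ℝ} (h0 : 0 ≤ p) (h1 : p ≤ 1) (r : α → ℕ)
    (Y : α → Finset α → ℝ) (B : α → ℝ) (hB : ∀ a G, |Y a G| ≤ B a)
    (hpred : ∀ a b G, r a ≤ r b → Y a (insert b G) = Y a G) (A : Finset α)
    {S t : ℝ} (hS : 0 < S) (ht : 0 ≤ t) (hBS : ∑ a ∈ A, B a ^ 2 ≤ S) :
    bernExp p A (fun G => if t < |∑ a ∈ A, cInd p G a * Y a G| then 1 else 0) ≤
      2 * Real.exp (-(t ^ 2 / (2 * S))) := by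
  have side : ∀ s : ℝ, s ^ 2 = (t / S) ^ 2 →
      bernExp p A (fun G => Real.exp (s * ∑ a ∈ A, cInd p G a * Y a G) *
        Real.exp (-(t ^ 2 / S))) ≤ Real.exp (-(t ^ 2 / (2 * S))) := by
    intro s hs
    rw [bernExp_mul_const]
    calc _ ≤ Real.exp (s ^ 2 * S / 2) * Real.exp (-(t ^ 2 / S)) := by
          gcongr
          refine (bernExp_exp_le h0 h1 r Y B hB hpred s A).trans ?_
          gcongr
      _ = _ := by
          rw [← Real.exp_add, hs]
          congr 1
          field_simp
          ring

  calc _ ≤ bernExp p A (fun G =>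
          Real.exp (t / S * ∑ a ∈ A, cInd p G a * Y a G) * Real.exp (-(t ^ 2 / S)) +
          Real.exp (-(t / S) * ∑ a ∈ A, cInd p G a * Y a G) * Real.exp (-(t ^ 2 / S))) := by
          refine bernExp_mono h0 h1 fun G _ => ?_
          set T := ∑ a ∈ A, cInd p G a * Y a G
          split_ifs with h
          · have hts : 0 ≤ t / S := by positivity
            rw [← Real.exp_add, ← Real.exp_add]
            rcases lt_abs.1 h with h | h
            · have : 0 ≤ t / S * T + -(t ^ 2 / S) := by
                have := mul_le_mul_of_nonneg_left h.le hts
                have e : t / S * t = t ^ 2 / S := by ring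
                linarith
              linarith [Real.one_le_exp this, Real.exp_pos (-(t / S) * T + -(t ^ 2 / S))]
            · have : 0 ≤ -(t / S) * T + -(t ^ 2 / S) := by
                have := mul_le_mul_of_nonneg_left h.le hts
                have e : t / S * t = t ^ 2 / S := by ring
                linarith
              linarith [Real.one_le_exp this, Real.exp_pos (t / S * T + -(t ^ 2 / S))]
          · positivity
      _ ≤ _ := by
          rw [bernExp_add, two_mul]
          exact add_le_add (side _ rfl) (side _ (by ring))

end BernoulliSubsets

/-! ### From binomial to uniform random graphs -/

/-- The mode of the binomial distribution `Bin(N, M/N)` is `M`, so the mass there is at least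
`1 / (N + 1)`. -/
lemma one_le_binomial_mode {N M : ℕ} (hM : 0 < M) (hMN : M < N) {p : ℝ} (hp : p = (M : ℝ) / N) :
    1 ≤ ((N : ℝ) + 1) * (p ^ M * (1 - p) ^ (N - M) * (N.choose M : ℝ)) := by
  have hN : (0 : ℝ) < N := by exact_mod_cast hM.trans hMN
  have hM' : (0 : ℝ) < M := by exact_mod_cast hM
  have hMN' : (M : ℝ) < N := by exact_mod_cast hMN
  have hp0 : 0 < p := by rw [hp]; positivity
  have hpN : p * N = M := by rw [hp]; field_simp
  have hq0 : 0 < 1 - p := by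
    have : p < 1 := by rw [hp, div_lt_one hN]; exact hMN'
    linarith
  set a : ℕ → ℝ := fun k => p ^ k * (1 - p) ^ (N - k) * (N.choose k : ℝ) with ha
  have ha0 : ∀ k, 0 ≤ a k := fun k => by positivity
  have step : ∀ k < N, a (k + 1) * (((k : ℝ) + 1) * (1 - p)) = a k * (((N : ℝ) - k) * p) := by
    intro k hk
    have hc : (N.choose (k + 1) : ℝ) * ((k : ℝ) + 1) = N.choose k * ((N : ℝ) - k) := by
      have := Nat.choose_succ_right_eq N k
      rw [← Nat.cast_sub hk.le]
      exact_mod_cast this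
    simp only [ha]
    rw [show N - k = (N - (k + 1)) + 1 by omega, pow_succ, pow_succ]
    linear_combination (p ^ k * p * (1 - p) ^ (N - (k + 1)) * (1 - p)) * hc
  have up : ∀ k, k < M → a k ≤ a (k + 1) := by
    intro k hk
    have hk' : (k : ℝ) + 1 ≤ M := by exact_mod_cast hk
    have hpos : 0 < ((k : ℝ) + 1) * (1 - p) := by positivity
    refine le_of_mul_le_mul_right ?_ hpos
    rw [step k (hk.trans hMN)]
    refine mul_le_mul_of_nonneg_left ?_ (ha0 k)
    nlinarith
  have down : ∀ k, M ≤ k → k < N → a (k + 1) ≤ a k := by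
    intro k hk hkN
    have hk' : (M : ℝ) ≤ k := by exact_mod_cast hk
    have hpos : 0 < ((k : ℝ) + 1) * (1 - p) := by positivity
    refine le_of_mul_le_mul_right ?_ hpos
    rw [step k hkN]
    refine mul_le_mul_of_nonneg_left ?_ (ha0 k)
    nlinarith
  have up' : ∀ j k, k + j = M → a k ≤ a M := by
    intro j
    induction j with
    | zero => intro k hk; simp only [add_zero] at hk; rw [hk]
    | succ j ih => intro k hk; exact (up k (by omega)).trans (ih (k + 1) (by omega))
  have down' : ∀ j, M + j ≤ N → a (M + j) ≤ a M := by
    intro j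
    induction j with
    | zero => intro _; simp
    | succ j ih => intro hj; exact (down (M + j) (by omega) (by omega)).trans (ih (by omega))
  have hmax : ∀ k ∈ Finset.range (N + 1), a k ≤ a M := by
    intro k hk
    have hk := Finset.mem_range.1 hk
    rcases le_total k M with h | h
    · exact up' (M - k) k (by omega)
    · have := down' (k - M) (by omega)
      rwa [show M + (k - M) = k by omega] at this
  have hsum : (1 : ℝ) = ∑ k ∈ Finset.range (N + 1), a k := by
    have := add_pow p (1 - p) N
    rw [← this]; simp
  calc (1 : ℝ) = ∑ k ∈ Finset.range (N + 1), a k := hsum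
    _ ≤ ∑ k ∈ Finset.range (N + 1), a M := Finset.sum_le_sum hmax
    _ = _ := by simp [ha]

lemma card_completeEdges (n : ℕ) : #(completeEdges n) = n.choose 2 := by
  have := Sym2.card_subtype_not_diag (α := Fin n)
  rw [Fintype.card_fin, Fintype.card_subtype] at this
  rw [← this]
  unfold completeEdges
  congr

lemma card_completeEdges_cast (n : ℕ) : (#(completeEdges n) : ℝ) = Nr n := by
  rw [card_completeEdges, Nat.cast_choose_two, Nr]

lemma mem_completeEdges {n : ℕ} (e : Sym2 (Fin n)) : e ∈ completeEdges n ↔ ¬ e.IsDiag := by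
  simp [completeEdges]

lemma graphsM_eq (n M : ℕ) : graphsM n M = (completeEdges n).powersetCard M := by
  ext G
  simp [graphsM, Finset.mem_powersetCard]

/-- Conditioning the binomial random graph on having `M` edges costs at most a factor `N + 1`. -/
lemma PrGnM_ge {n M : ℕ} (hM : 0 < M) (hMN : M < #(completeEdges n)) {p : ℝ}
    (hp : p = (M : ℝ) / #(completeEdges n)) (P Q : Finset (Sym2 (Fin n)) → Prop)
    [DecidablePred Q] (hPQ : ∀ G ∈ graphsM n M, ¬ Q G → P G) :
    1 - ((#(completeEdges n) : ℝ) + 1) *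
      bernExp p (completeEdges n) (fun G => if Q G then 1 else 0) ≤ PrGnM n M P := by
  classical
  have hmode := one_le_binomial_mode hM hMN hp
  set A := completeEdges n with hA
  have hN : (0 : ℝ) < #A := by exact_mod_cast hM.trans hMN
  have hp0 : 0 ≤ p := by rw [hp]; positivity
  have hq0 : 0 ≤ 1 - p := by
    have : p ≤ 1 := by rw [hp, div_le_one hN]; exact_mod_cast hMN.le
    linarith
  set w := p ^ M * (1 - p) ^ (#A - M) with hw
  have hw0 : 0 ≤ w := by positivity
  have hcard : #(graphsM n M) = (#A).choose M := by rw [graphsM_eq, Finset.card_powersetCard]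
  have hΩ : (0 : ℝ) < #(graphsM n M) := by
    rw [hcard]; exact_mod_cast Nat.choose_pos hMN.le
  have hbad : w * #((graphsM n M).filter (fun G => ¬ P G)) ≤
      bernExp p A (fun G => if Q G then 1 else 0) := by
    unfold bernExp
    have hsub : (graphsM n M).filter (fun G => ¬ P G) ⊆ A.powerset := by
      intro G hG
      have := (Finset.mem_filter.1 hG).1
      rw [graphsM_eq, Finset.mem_powersetCard] at this
      exact Finset.mem_powerset.2 this.1
    refine le_trans ?_ (Finset.sum_le_sum_of_subset_of_nonneg hsub ?_)
    · rw [mul_comm, ← nsmul_eq_mul, ← Finset.sum_const]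
      refine Finset.sum_le_sum fun G hG => ?_
      obtain ⟨h1, h2⟩ := Finset.mem_filter.1 hG
      have hQ : Q G := by
        by_contra h
        exact h2 (hPQ G h1 h)
      rw [graphsM_eq, Finset.mem_powersetCard] at h1
      simp [hQ, h1.2, hw]
    · intro G _ _
      have : (0 : ℝ) ≤ if Q G then 1 else 0 := by split_ifs <;> norm_num
      exact mul_nonneg (by positivity) this
  have hsplit : (#((graphsM n M).filter P) : ℝ) + #((graphsM n M).filter (fun G => ¬ P G)) =
      #(graphsM n M) := by
    exact_mod_cast Finset.card_filter_add_card_filter_not P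
  have hPr : PrGnM n M P = (#((graphsM n M).filter P) : ℝ) / #(graphsM n M) := by
    unfold PrGnM Pru
    congr
  rw [hPr, le_div_iff₀ hΩ]
  rw [← hcard] at hmode
  set b := (#((graphsM n M).filter (fun G => ¬ P G)) : ℝ)
  set E := bernExp p A (fun G => if Q G then 1 else 0)
  have hb0 : 0 ≤ b := Nat.cast_nonneg _
  have h1 : b ≤ ((#A : ℝ) + 1) * E * #(graphsM n M) := by
    calc b = 1 * b := (one_mul b).symm
      _ ≤ (((#A : ℝ) + 1) * (w * #(graphsM n M))) * b := by gcongr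
      _ = (((#A : ℝ) + 1) * #(graphsM n M)) * (w * b) := by ring
      _ ≤ (((#A : ℝ) + 1) * #(graphsM n M)) * E := by gcongr
      _ = _ := by ring
  nlinarith

/-! ### Concentration of the degree variance -/

section DegreeVariance

variable {n : ℕ}

/-- The vertex-edge incidence indicator. -/
def inc (v : Fin n) (e : Sym2 (Fin n)) : ℝ := if v ∈ e then 1 else 0

/-- The number of common endpoints of `e` and `f`. -/
def meet (e f : Sym2 (Fin n)) : ℝ := ∑ v, inc v e * inc v f

lemma inc_nonneg (v : Fin n) (e : Sym2 (Fin n)) : 0 ≤ inc v e := by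
  unfold inc; split_ifs <;> norm_num

lemma inc_le_one (v : Fin n) (e : Sym2 (Fin n)) : inc v e ≤ 1 := by
  unfold inc; split_ifs <;> norm_num

lemma meet_comm (e f : Sym2 (Fin n)) : meet e f = meet f e :=
  Finset.sum_congr rfl fun _ _ => mul_comm _ _

lemma meet_nonneg (e f : Sym2 (Fin n)) : 0 ≤ meet e f :=
  Finset.sum_nonneg fun v _ => mul_nonneg (inc_nonneg v e) (inc_nonneg v f)

lemma sum_inc {e : Sym2 (Fin n)} (he : e ∈ completeEdges n) : ∑ v, inc v e = 2 := by
  have h := Sym2.card_toFinset_of_not_isDiag e ((mem_completeEdges e).1 he)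
  have h2 : (Finset.univ.filter (fun v => v ∈ e)) = e.toFinset := by
    ext v; simp
  simp only [inc]
  rw [Finset.sum_boole, h2, h]
  norm_num

lemma meet_self {e : Sym2 (Fin n)} (he : e ∈ completeEdges n) : meet e e = 2 := by
  rw [← sum_inc he]
  refine Finset.sum_congr rfl fun v _ => ?_
  unfold inc; split_ifs <;> norm_num

lemma meet_le_two {e : Sym2 (Fin n)} (he : e ∈ completeEdges n) (f : Sym2 (Fin n)) :
    meet e f ≤ 2 := by
  rw [← sum_inc he]
  exact Finset.sum_le_sum fun v _ => mul_le_of_le_one_right (inc_nonneg v e) (inc_le_one v f)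

/-- The degree counts incident edges; loops, if present, are counted once on both sides. -/
lemma dS_eq_sum (G : Finset (Sym2 (Fin n))) (v : Fin n) :
    (dS G Finset.univ v : ℝ) = ∑ e ∈ G, inc v e := by
  classical
  have h : #(Finset.univ.filter (fun w => s(v, w) ∈ G)) = #(G.filter (fun e => v ∈ e)) := by
    refine Finset.card_bij (fun w _ => s(v, w)) ?_ ?_ ?_
    · intro w hw
      simpa using hw
    · intro a _ b _ hab
      exact Sym2.congr_right.1 hab
    · intro e he
      obtain ⟨h1, h2⟩ := Finset.mem_filter.1 he
      obtain ⟨w, rfl⟩ := Sym2.mem_iff_exists.1 h2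
      exact ⟨w, by simpa using h1, rfl⟩
  have h' : dS G Finset.univ v = #(Finset.univ.filter (fun w => s(v, w) ∈ G)) := by
    unfold dS; congr
  rw [h', h]
  simp only [inc]
  rw [Finset.sum_boole]

lemma sum_inc_completeEdges (hn : 1 ≤ n) (v : Fin n) :
    ∑ e ∈ completeEdges n, inc v e = (n : ℝ) - 1 := by
  classical
  rw [← dS_eq_sum]
  have h' : dS (completeEdges n) Finset.univ v = #(Finset.univ.erase v) := by
    unfold dS
    congr 1
    ext w
    simp [mem_completeEdges, eq_comm]
  rw [h', Finset.card_erase_of_mem (Finset.mem_univ v)]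
  simp [Nat.cast_sub hn]

/-- Splitting a symmetric double sum along an injective ranking. -/
lemma sum_sum_symm {α : Type*} (A : Finset α) (r : α → ℕ) (hr : Function.Injective r)
    (h : α → α → ℝ) (hsymm : ∀ e f, h e f = h f e) :
    ∑ e ∈ A, ∑ f ∈ A, h e f =
      ∑ e ∈ A, h e e + 2 * ∑ e ∈ A, ∑ f ∈ A, if r f < r e then h e f else 0 := by
  classical
  have h1 : ∑ e ∈ A, ∑ f ∈ A, (if r e < r f then h e f else 0) =
      ∑ e ∈ A, ∑ f ∈ A, if r f < r e then h e f else 0 := by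
    rw [Finset.sum_comm]
    refine Finset.sum_congr rfl fun e _ => Finset.sum_congr rfl fun f _ => ?_
    rw [hsymm]
  have h2 : ∑ e ∈ A, h e e = ∑ e ∈ A, ∑ f ∈ A, if e = f then h e f else 0 := by
    refine Finset.sum_congr rfl fun e he => ?_
    rw [Finset.sum_ite_eq]
    simp [he]
  rw [two_mul, h2]
  nth_rewrite 2 [← h1]
  simp only [← Finset.sum_add_distrib]
  refine Finset.sum_congr rfl fun e _ => Finset.sum_congr rfl fun f _ => ?_
  rcases lt_trichotomy (r e) (r f) with hlt | heq | hlt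
  · have : e ≠ f := fun h => by simp [h] at hlt
    simp [hlt, hlt.le, this]
  · have : e = f := hr heq
    simp [this]
  · have : e ≠ f := fun h => by simp [h] at hlt
    simp [hlt, hlt.le, this]

/-- The sum of the centred indicators of the edges of rank below `e`, weighted by the number of
endpoints shared with `e`. -/
def prevSum (p : ℝ) (r : Sym2 (Fin n) → ℕ) (G : Finset (Sym2 (Fin n))) (e : Sym2 (Fin n)) : ℝ :=
  ∑ f ∈ completeEdges n, cInd p G f * (if r f < r e then meet e f else 0)

lemma prevSum_insert (p : ℝ) (r : Sym2 (Fin n) → ℕ) (G : Finset (Sym2 (Fin n)))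
    (e b : Sym2 (Fin n)) (h : r e ≤ r b) : prevSum p r (insert b G) e = prevSum p r G e := by
  refine Finset.sum_congr rfl fun f _ => ?_
  split_ifs with hf
  · have : f ≠ b := fun hfb => by subst hfb; omega
    simp [cInd, this]
  · simp

/-- The diagonal part of the degree variance is deterministic once the number of edges is fixed;
what remains is a quadratic form in the centred edge indicators. -/
lemma Vdeg_eq (hn : 2 ≤ n) {M : ℕ} {p : ℝ} (hp : p = (M : ℝ) / Nr n)
    (r : Sym2 (Fin n) → ℕ) (hr : Function.Injective r)
    {G : Finset (Sym2 (Fin n))} (hG : G ∈ graphsM n M) :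
    Vdeg G = 2 * Nr n * (p * (1 - p)) +
      2 * ∑ e ∈ completeEdges n, cInd p G e * prevSum p r G e := by
  classical
  rw [graphsM_eq, Finset.mem_powersetCard] at hG
  obtain ⟨hGA, hGM⟩ := hG
  have hn' : (2 : ℝ) ≤ n := by exact_mod_cast hn
  have hn0 : (n : ℝ) ≠ 0 := by positivity
  have hn1 : (n : ℝ) - 1 ≠ 0 := by intro h; linarith
  have hNr : Nr n ≠ 0 := by unfold Nr; positivity
  have hpn : p * ((n : ℝ) - 1) = 2 * M / n := by
    rw [hp, Nr]; field_simp
  have hpN : p * Nr n = M := by rw [hp]; field_simp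
  set A := completeEdges n with hA
  have hfilter : A.filter (fun e => e ∈ G) = G := by
    ext e; simp only [Finset.mem_filter]; exact ⟨fun h => h.2, fun h => ⟨hGA h, h⟩⟩
  -- the centred degrees
  set D : Fin n → ℝ := fun v => ∑ e ∈ A, inc v e * cInd p G e with hD
  have hdeg : ∀ v, (dS G Finset.univ v : ℝ) = D v + 2 * M / n := by
    intro v
    have h1 : ∑ e ∈ G, inc v e = ∑ e ∈ A, inc v e * (if e ∈ G then 1 else 0) := by
      simp only [mul_ite, mul_one, mul_zero]
      rw [← Finset.sum_filter, hfilter]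
    have h2 : D v = ∑ e ∈ A, inc v e * (if e ∈ G then 1 else 0) - (∑ e ∈ A, inc v e) * p := by
      rw [hD, Finset.sum_mul, ← Finset.sum_sub_distrib]
      exact Finset.sum_congr rfl fun e _ => by unfold cInd; ring
    rw [dS_eq_sum, h1, h2, sum_inc_completeEdges (by omega), ← hpn]
    ring
  have hsumdeg : ∑ v : Fin n, (dS G Finset.univ v : ℝ) = 2 * M := by
    simp only [dS_eq_sum]
    rw [Finset.sum_comm, Finset.sum_congr rfl fun e he => sum_inc (hGA he)]
    simp [hGM, mul_comm]
  have hsumD : ∑ v, D v = 0 := by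
    have : ∑ v, (D v + 2 * (M : ℝ) / n) = 2 * M :=
      (Finset.sum_congr rfl fun v _ => (hdeg v).symm).trans hsumdeg
    rw [Finset.sum_add_distrib] at this
    simp only [Finset.sum_const, Finset.card_univ, Fintype.card_fin, nsmul_eq_mul] at this
    have e : (n : ℝ) * (2 * M / n) = 2 * M := by field_simp
    linarith
  have hV : Vdeg G = ∑ v, D v ^ 2 := by
    unfold Vdeg
    simp only [hdeg, hGM]
    have : ∀ v, (D v + 2 * (M : ℝ) / n) ^ 2 =
        D v ^ 2 + 2 * (2 * M / n) * D v + (2 * M / n) ^ 2 := fun v => by ring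
    simp only [this, Finset.sum_add_distrib]
    rw [← Finset.mul_sum, hsumD]
    simp
  have hV2 : ∑ v, D v ^ 2 = ∑ e ∈ A, ∑ f ∈ A, meet e f * (cInd p G e * cInd p G f) := by
    have : ∀ v, D v ^ 2 =
        ∑ e ∈ A, ∑ f ∈ A, inc v e * inc v f * (cInd p G e * cInd p G f) := by
      intro v
      rw [sq, hD, Finset.sum_mul_sum]
      exact Finset.sum_congr rfl fun e _ => Finset.sum_congr rfl fun f _ => by ring
    simp only [this]
    rw [Finset.sum_comm]
    refine Finset.sum_congr rfl fun e _ => ?_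
    rw [Finset.sum_comm]
    refine Finset.sum_congr rfl fun f _ => ?_
    rw [meet, Finset.sum_mul]
  rw [hV, hV2, sum_sum_symm A r hr _ (fun e f => by rw [meet_comm, mul_comm (cInd p G e)])]
  congr 1
  · have h1 : ∀ e ∈ A, meet e e * (cInd p G e * cInd p G e) =
        2 * (1 - 2 * p) * (if e ∈ G then 1 else 0) + 2 * p ^ 2 := by
      intro e he
      rw [meet_self he]
      unfold cInd
      split_ifs <;> ring
    rw [Finset.sum_congr rfl h1, Finset.sum_add_distrib, ← Finset.mul_sum, Finset.sum_boole,
      hfilter, hGM, Finset.sum_const, nsmul_eq_mul, card_completeEdges_cast, ← hpN]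
    ring
  · congr 1
    refine Finset.sum_congr rfl fun e _ => ?_
    rw [prevSum, Finset.mul_sum]
    refine Finset.sum_congr rfl fun f _ => ?_
    split_ifs <;> ring

lemma sum_meet_sq_le (hn : 1 ≤ n) (r : Sym2 (Fin n) → ℕ) {e : Sym2 (Fin n)}
    (he : e ∈ completeEdges n) :
    ∑ f ∈ completeEdges n, (if r f < r e then meet e f else 0) ^ 2 ≤ 4 * (n : ℝ) := by
  calc _ ≤ ∑ f ∈ completeEdges n, 2 * meet e f := by
        refine Finset.sum_le_sum fun f _ => ?_
        have h0 := meet_nonneg e f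
        have h2 := meet_le_two he f
        split_ifs <;> nlinarith
    _ = 2 * ∑ v, inc v e * ∑ f ∈ completeEdges n, inc v f := by
        rw [← Finset.mul_sum]
        unfold meet
        rw [Finset.sum_comm]
        simp only [Finset.mul_sum]
    _ = 4 * ((n : ℝ) - 1) := by
        simp only [sum_inc_completeEdges hn]
        rw [← Finset.sum_mul, sum_inc he]
        ring
    _ ≤ _ := by linarith

open Classical in
/-- Concentration of the degree variance in `G_{n,M}`. The quadratic form of `Vdeg_eq` is a
martingale under edge exposure; `B` is the level at which its increments are truncated. -/
lemma Vdeg_concentration (hn : 2 ≤ n) {M : ℕ} (hM : 0 < M) (hMN : (M : ℝ) < Nr n) {p : ℝ}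
    (hp : p = (M : ℝ) / Nr n) {B t : ℝ} (hB : 0 < B) (ht : 0 ≤ t)
    (P : Finset (Sym2 (Fin n)) → Prop)
    (hP : ∀ G ∈ graphsM n M, |Vdeg G - 2 * Nr n * (p * (1 - p))| ≤ 2 * t → P G) :
    1 - (Nr n + 1) * (2 * Real.exp (-(t ^ 2 / (2 * (Nr n * B ^ 2)))) +
      Nr n * (2 * Real.exp (-(B ^ 2 / (2 * (4 * n)))))) ≤ PrGnM n M P := by
  set A := completeEdges n with hA
  have hcard := card_completeEdges_cast n
  have hNpos : 0 < Nr n := lt_of_le_of_lt (Nat.cast_nonneg M) hMN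
  have h0 : 0 ≤ p := by rw [hp]; positivity
  have h1 : p ≤ 1 := by rw [hp, div_le_one hNpos]; exact hMN.le
  obtain ⟨r, hr⟩ : ∃ r : Sym2 (Fin n) → ℕ, Function.Injective r :=
    ⟨fun e => (Fintype.equivFin _ e : ℕ), fun a b h =>
      (Fintype.equivFin _).injective (Fin.ext h)⟩
  set Y : Sym2 (Fin n) → Finset (Sym2 (Fin n)) → ℝ := fun e G =>
    if |prevSum p r G e| ≤ B then prevSum p r G e else 0 with hY
  set Q : Finset (Sym2 (Fin n)) → Prop := fun G =>
    t < |∑ e ∈ A, cInd p G e * Y e G| ∨ ∃ e ∈ A, B < |prevSum p r G e| with hQ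
  have hQP : ∀ G ∈ graphsM n M, ¬ Q G → P G := by
    intro G hG hnQ
    refine hP G hG ?_
    simp only [hQ, not_or, not_lt, not_exists, not_and] at hnQ
    have hsum : ∑ e ∈ A, cInd p G e * Y e G = ∑ e ∈ A, cInd p G e * prevSum p r G e := by
      refine Finset.sum_congr rfl fun e he => ?_
      simp only [hY]
      rw [if_pos (hnQ.2 e he)]
    rw [Vdeg_eq hn hp r hr hG, ← hA, ← hsum, add_sub_cancel_left, abs_mul, abs_two]
    linarith [hnQ.1]
  have hmain : bernExp p A (fun G => if t < |∑ e ∈ A, cInd p G e * Y e G| then 1 else 0) ≤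
      2 * Real.exp (-(t ^ 2 / (2 * (Nr n * B ^ 2)))) := by
    refine bernExp_tail h0 h1 r Y (fun _ => B) ?_ ?_ A (by positivity) ht ?_
    · intro e G
      simp only [hY]
      split_ifs with h
      · exact h
      · simpa using hB.le
    · intro a b G hab
      simp only [hY, prevSum_insert p r G a b hab]
    · rw [Finset.sum_const, nsmul_eq_mul, hcard]
  have hside : ∀ e ∈ A, bernExp p A (fun G => if B < |prevSum p r G e| then 1 else 0) ≤
      2 * Real.exp (-(B ^ 2 / (2 * (4 * n)))) := by
    intro e he
    have hn0 : (0 : ℝ) < n := by exact_mod_cast (by omega : 0 < n)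
    exact bernExp_tail h0 h1 r (fun f _ => if r f < r e then meet e f else 0)
      (fun f => if r f < r e then meet e f else 0)
      (fun f _ => by
        rw [abs_of_nonneg]
        split_ifs
        · exact meet_nonneg e f
        · exact le_rfl)
      (fun _ _ _ _ => rfl) A (by positivity) hB.le (sum_meet_sq_le (by omega) r he)
  have hbad : bernExp p A (fun G => if Q G then 1 else 0) ≤
      2 * Real.exp (-(t ^ 2 / (2 * (Nr n * B ^ 2)))) +
        Nr n * (2 * Real.exp (-(B ^ 2 / (2 * (4 * n))))) := by
    calc _ ≤ bernExp p A (fun G => (if t < |∑ e ∈ A, cInd p G e * Y e G| then 1 else 0) +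
          ∑ e ∈ A, if B < |prevSum p r G e| then 1 else 0) := by
          refine bernExp_mono h0 h1 fun G _ => ?_
          have hnn : ∀ e ∈ A, (0 : ℝ) ≤ if B < |prevSum p r G e| then 1 else 0 := by
            intro e _; split_ifs <;> norm_num
          have hs := Finset.sum_nonneg hnn
          by_cases hq : Q G
          · rw [if_pos hq]
            rcases hq with hq | ⟨e, he, hq⟩
            · rw [if_pos hq]; linarith
            · have := Finset.single_le_sum hnn he
              rw [if_pos hq] at this
              split_ifs <;> linarith
          · rw [if_neg hq]
            split_ifs <;> linarith
      _ ≤ _ := by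
          rw [bernExp_add, bernExp_sum]
          refine add_le_add hmain ((Finset.sum_le_sum hside).trans ?_)
          rw [Finset.sum_const, nsmul_eq_mul, hcard]
  have hMN' : M < #A := by
    rw [← hcard] at hMN; exact_mod_cast hMN
  have hfin := PrGnM_ge hM hMN' (p := p) (by rw [hp, hcard]) P Q hQP
  rw [hcard] at hfin
  refine le_trans ?_ hfin
  have := mul_le_mul_of_nonneg_left hbad (by linarith : 0 ≤ Nr n + 1)
  linarith

end DegreeVariance

/-! ### Asymptotics -/

/-- The polynomial factor lost in the union bound and in the conditioning is absorbed by
weakening the exponent from `ε` to `ε / 2`. -/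
lemma tail_eventually {ε : ℝ} (hε : 0 < ε) : ∃ n₁ : ℕ, ∀ n ≥ n₁,
    2 * (n : ℝ) ^ 4 * Real.exp (-((n : ℝ) ^ ε / 8)) ≤ Real.exp (-(n : ℝ) ^ (ε / 2)) := by
  have hy : Filter.Tendsto (fun n : ℕ => (n : ℝ) ^ (ε / 2)) Filter.atTop Filter.atTop :=
    (tendsto_rpow_atTop (by positivity)).comp tendsto_natCast_atTop_atTop
  have h1 := (tendsto_rpow_mul_exp_neg_mul_atTop_nhds_zero (8 / ε) 1 one_pos).comp hy
  have h2 := h1.eventually (gt_mem_nhds (show (0 : ℝ) < 1 / 2 by norm_num))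
  have h3 := hy.eventually_ge_atTop 16
  obtain ⟨n₁, hn₁⟩ := Filter.eventually_atTop.1 (h2.and (h3.and (Filter.eventually_ge_atTop 1)))
  refine ⟨n₁, fun n hn => ?_⟩
  obtain ⟨ha, hb, hc⟩ := hn₁ n hn
  have hn0 : (0 : ℝ) < n := by exact_mod_cast hc
  simp only [Function.comp] at ha
  set y := (n : ℝ) ^ (ε / 2) with hy
  have hy4 : y ^ (8 / ε) = (n : ℝ) ^ 4 := by
    rw [hy, ← Real.rpow_mul hn0.le, ← Real.rpow_natCast]
    congr 1
    field_simp
    norm_num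
  have hy2 : (n : ℝ) ^ ε = y ^ 2 := by
    rw [hy, ← Real.rpow_natCast, ← Real.rpow_mul hn0.le]
    congr 1
    push_cast
    ring
  rw [hy4] at ha
  rw [hy2]
  have hexp : Real.exp (-(y ^ 2 / 8)) ≤ Real.exp (-1 * y) * Real.exp (-y) := by
    rw [← Real.exp_add]
    apply Real.exp_le_exp.2
    nlinarith
  calc _ ≤ 2 * (n : ℝ) ^ 4 * (Real.exp (-1 * y) * Real.exp (-y)) := by gcongr
    _ = 2 * ((n : ℝ) ^ 4 * Real.exp (-1 * y)) * Real.exp (-y) := by ring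
    _ ≤ 1 * Real.exp (-y) := by gcongr; linarith
    _ = _ := one_mul _

lemma lamP_ge {δ : ℝ} {n M k : ℕ} (hδ : 0 < δ) (hn0 : (0 : ℝ) < n) (hN0 : 0 < Nr n)
    (hM1 : δ ≤ (M : ℝ) / Nr n) (hM2 : (M : ℝ) / Nr n ≤ 1 - δ)
    (hk1 : δ ≤ (k : ℝ) / n) (hk2 : (k : ℝ) / n ≤ 1 - δ) : δ ^ 5 / 2 ≤ lamP n M k := by
  set p := (M : ℝ) / Nr n with hp
  set c := (k : ℝ) / n with hc
  have h : lamP n M k = (1 - c ^ 2) * c ^ 2 / 2 * (p * (1 - p)) := by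
    unfold lamP
    rw [hp, hc]
    field_simp
  have h1 : δ ≤ 1 - c ^ 2 := by nlinarith
  have h2 : δ ^ 2 ≤ c ^ 2 := by gcongr
  have h3 : δ * δ ≤ p * (1 - p) := mul_le_mul hM1 (by linarith) hδ.le (by linarith)
  have h4 : δ * δ ^ 2 ≤ (1 - c ^ 2) * c ^ 2 := mul_le_mul h1 h2 (by positivity) (by linarith)
  rw [h]
  calc δ ^ 5 / 2 = (δ * δ ^ 2) / 2 * (δ * δ) := by ring
    _ ≤ _ := by
      have : 0 ≤ (1 - c ^ 2) * c ^ 2 := le_trans (by positivity) h4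
      gcongr

/-- If the degree variance is within `2 * n ^ 2 * x` of `2 N p (1 - p)`, then `Σ₁₁` is within
`O(x + 1 / n)` of `λ`. -/
lemma sigma_close {n M k : ℕ} (hn : 6 ≤ n) (hk : 2 ≤ k) (hkn : k + 2 ≤ n) {p V x : ℝ}
    (hp : p = (M : ℝ) / Nr n) (h0 : 0 ≤ p) (h1 : p ≤ 1)
    (hV : |V - 2 * Nr n * (p * (1 - p))| ≤ 2 * ((n : ℝ) ^ 2 * x)) (hx : 1 / (n : ℝ) ≤ x) :
    |(2 * Kr k * Kr (n - k) / ((n:ℝ)^2 * (Nr n)^2 * ((n:ℝ) - 2) * ((n:ℝ) - 3))) *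
        ((M:ℝ) * (Nr n - (M:ℝ)) + (((k:ℝ) - 2) / (((n - k : ℕ):ℝ) - 1)) * Nr n * V) -
      lamP n M k| ≤ 96 * x := by
  have hn' : (6 : ℝ) ≤ n := by exact_mod_cast hn
  have hk' : (2 : ℝ) ≤ k := by exact_mod_cast hk
  have hkn' : (k : ℝ) + 2 ≤ n := by exact_mod_cast hkn
  have hN4 : (n : ℝ) ^ 2 / 4 ≤ Nr n := by unfold Nr; nlinarith
  have hN0 : 0 < Nr n := lt_of_lt_of_le (by positivity) hN4
  have hMp : (M : ℝ) = p * Nr n := by rw [hp]; field_simp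
  have hx0 : 0 < x := lt_of_lt_of_le (by positivity) hx
  unfold Kr lamP
  rw [hMp, Nat.cast_sub (by omega : k ≤ n)]
  generalize (n : ℝ) = a at *
  generalize (k : ℝ) = b at *
  generalize Nr n = N at *
  have ha : 0 < a := by linarith
  have ha2 : 0 < a - 2 := by linarith
  have ha3 : 0 < a - 3 := by linarith
  have hm1 : a - b - 1 ≠ 0 := by intro h; linarith
  have hden : a ^ 2 / 4 ≤ (a - 2) * (a - 3) := by nlinarith
  set u := p * (1 - p) with hu
  have hu0 : 0 ≤ u := mul_nonneg h0 (by linarith)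
  have hu1 : u ≤ 1 := by nlinarith
  have hsplit : (2 * (b * (b - 1) / 2) * ((a - b) * (a - b - 1) / 2) /
        (a ^ 2 * N ^ 2 * (a - 2) * (a - 3))) *
        (p * N * (N - p * N) + ((b - 2) / (a - b - 1)) * N * V) -
      (a ^ 2 - b ^ 2) * b ^ 2 / (2 * a ^ 4) * (p * N * (N - p * N) / N ^ 2) =
      u * (b * (a - b)) * (a ^ 2 * (5 - 6 * b - a) + (b * a + b ^ 2) * (5 * a - 6)) /
        (2 * a ^ 4 * ((a - 2) * (a - 3))) +
      b * (b - 1) * (a - b) * (b - 2) / (2 * a ^ 2 * N * ((a - 2) * (a - 3))) *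
        (V - 2 * N * u) := by
    rw [hu]
    field_simp
    ring
  rw [hsplit]
  have hmain : |u * (b * (a - b)) * (a ^ 2 * (5 - 6 * b - a) + (b * a + b ^ 2) * (5 * a - 6)) /
        (2 * a ^ 4 * ((a - 2) * (a - 3)))| ≤ 80 * x := by
    have hb1 : b * (a - b) ≤ a * a := by nlinarith
    have hb0 : 0 ≤ b * (a - b) := mul_nonneg (by linarith) (by linarith)
    have hin : |a ^ 2 * (5 - 6 * b - a) + (b * a + b ^ 2) * (5 * a - 6)| ≤ 40 * a ^ 3 := by
      have s1 : |a ^ 2 * (5 - 6 * b - a)| ≤ a ^ 2 * (7 * a) := by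
        rw [abs_mul, abs_of_nonneg (sq_nonneg a)]
        gcongr
        rw [abs_le]; constructor <;> linarith
      have s2 : |(b * a + b ^ 2) * (5 * a - 6)| ≤ (a * a + a ^ 2) * (5 * a) := by
        rw [abs_mul]
        have hba : b ≤ a := by linarith
        have hb00 : 0 ≤ b := by linarith
        rw [abs_of_nonneg (by positivity : 0 ≤ b * a + b ^ 2)]
        rw [abs_of_nonneg (by linarith : 0 ≤ 5 * a - 6)]
        gcongr
        · linarith
        · linarith
      have ha30 : 0 ≤ a ^ 3 := by positivity
      refine (abs_add_le _ _).trans ?_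
      nlinarith
    rw [abs_div, abs_mul, abs_mul, abs_of_nonneg hu0, abs_of_nonneg hb0,
      abs_of_pos (by positivity : 0 < 2 * a ^ 4 * ((a - 2) * (a - 3)))]
    calc _ ≤ 1 * (a * a) * (40 * a ^ 3) / (2 * a ^ 4 * (a ^ 2 / 4)) := by gcongr
      _ = 80 * (1 / a) := by field_simp; norm_num
      _ ≤ _ := by gcongr
  have hdev : |b * (b - 1) * (a - b) * (b - 2) / (2 * a ^ 2 * N * ((a - 2) * (a - 3))) *
        (V - 2 * N * u)| ≤ 16 * x := by
    have hc0 : 0 ≤ b * (b - 1) * (a - b) * (b - 2) :=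
      mul_nonneg (mul_nonneg (mul_nonneg (by linarith) (by linarith)) (by linarith)) (by linarith)
    have hc1 : b * (b - 1) * (a - b) * (b - 2) ≤ a * a * a * a := by
      have e1 : 0 ≤ b - 1 := by linarith
      have e2 : 0 ≤ a - b := by linarith
      have e3 : 0 ≤ b - 2 := by linarith
      have e4 : 0 ≤ b := by linarith
      gcongr <;> linarith
    rw [abs_mul, abs_of_nonneg (by positivity)]
    calc _ ≤ a * a * a * a / (2 * a ^ 2 * (a ^ 2 / 4) * (a ^ 2 / 4)) * (2 * (a ^ 2 * x)) := by
          gcongr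
      _ = 16 * x := by field_simp; norm_num
  refine (abs_add_le _ _).trans ?_
  linarith

/-- Corollary 2.9: `Σ₁₁ = λ(1 + O(n^(-1/2+ε)))` w.v.h.p..
Fix `δ, ε > 0`. There are `C > 0`, `η > 0`, `n₀` such that for all `n ≥ n₀` and `M, k` with
`M/N, k/n ∈ [δ, 1-δ]`, with probability at least `1 - exp(-n^η)` over `G_{n,M}`,
`|Σ₁₁ - λ| ≤ C·λ·n^(-1/2+ε)`. -/
theorem stmt_11 (δ ε : ℝ) (hδ : 0 < δ) (hε : 0 < ε) :
    ∃ C > (0:ℝ), ∃ η > (0:ℝ), ∃ n₀ : ℕ, ∀ n ≥ n₀, ∀ M k : ℕ,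
      δ ≤ (M : ℝ) / Nr n → (M : ℝ) / Nr n ≤ 1 - δ →
      δ ≤ (k : ℝ) / n → (k : ℝ) / n ≤ 1 - δ →
      PrGnM n M (fun G =>
          |(2 * Kr k * Kr (n - k) / ((n:ℝ)^2 * (Nr n)^2 * ((n:ℝ) - 2) * ((n:ℝ) - 3))) *
              ((M:ℝ) * (Nr n - (M:ℝ)) +
                (((k:ℝ) - 2) / (((n - k : ℕ):ℝ) - 1)) * Nr n * Vdeg G) -
            lamP n M k|
          ≤ C * lamP n M k * (n:ℝ) ^ (-(1/2 : ℝ) + ε))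
        ≥ 1 - Real.exp (-(n:ℝ) ^ η) := by
  -- the constant comes from `lamP n M k ≥ δ ^ 5 / 2`
  refine ⟨192 / δ ^ 5, by positivity, ε / 2, by positivity, ?_⟩
  obtain ⟨n₁, hn₁⟩ := tail_eventually hε
  refine ⟨max n₁ (max 6 ⌈2 / δ⌉₊), fun n hn M k hM1 hM2 hk1 hk2 => ?_⟩
  have hn1 : n₁ ≤ n := (le_max_left _ _).trans hn
  have hn6 : 6 ≤ n := (le_max_left _ _).trans ((le_max_right _ _).trans hn)
  have hnδ : 2 / δ ≤ n := (Nat.le_ceil _).trans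
    (by exact_mod_cast (le_max_right _ _).trans ((le_max_right _ _).trans hn))
  have hn6' : (6 : ℝ) ≤ n := by exact_mod_cast hn6
  have hn0 : (0 : ℝ) < n := by linarith
  have hN0 : 0 < Nr n := by unfold Nr; nlinarith
  rw [div_le_iff₀ hδ] at hnδ
  have hk2n : 2 ≤ k := by
    rw [le_div_iff₀ hn0] at hk1
    have : (2 : ℝ) ≤ k := by linarith
    exact_mod_cast this
  have hkn : k + 2 ≤ n := by
    rw [div_le_iff₀ hn0] at hk2
    have : (k : ℝ) + 2 ≤ n := by linarith
    exact_mod_cast this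
  set p := (M : ℝ) / Nr n with hp
  have hpN : p * Nr n = M := by rw [hp]; field_simp
  have hM0 : 0 < M := by
    have : (0 : ℝ) < M := by rw [← hpN]; exact mul_pos (by linarith) hN0
    exact_mod_cast this
  have hMN : (M : ℝ) < Nr n := by
    have : p < 1 := by linarith
    nlinarith
  set x := (n : ℝ) ^ (-(1 / 2 : ℝ) + ε) with hx
  have hx0 : 0 < x := Real.rpow_pos_of_pos hn0 _
  have hxn : 1 / (n : ℝ) ≤ x := by
    rw [one_div, ← Real.rpow_neg_one, hx]
    exact Real.rpow_le_rpow_of_exponent_le (by linarith) (by linarith)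
  have hlam : δ ^ 5 / 2 ≤ lamP n M k := lamP_ge hδ hn0 hN0 hM1 hM2 hk1 hk2
  set B := (n : ℝ) ^ (1 / 2 + ε / 2) with hB
  have hB0 : 0 < B := Real.rpow_pos_of_pos hn0 _
  have hB2 : B ^ 2 = n * (n : ℝ) ^ ε := by
    rw [hB, ← Real.rpow_natCast, ← Real.rpow_mul hn0.le]
    nth_rewrite 2 [← Real.rpow_one (n : ℝ)]
    rw [← Real.rpow_add hn0]
    congr 1
    push_cast
    ring
  have hx2 : x ^ 2 * n = (n : ℝ) ^ ε * (n : ℝ) ^ ε := by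
    rw [hx, ← Real.rpow_natCast, ← Real.rpow_mul hn0.le]
    nth_rewrite 2 [← Real.rpow_one (n : ℝ)]
    rw [← Real.rpow_add hn0, ← Real.rpow_add hn0]
    congr 1
    push_cast
    ring
  have hmain := Vdeg_concentration (n := n) (by omega) hM0 hMN hp hB0
    (t := (n : ℝ) ^ 2 * x) (by positivity) (fun G =>
          |(2 * Kr k * Kr (n - k) / ((n:ℝ)^2 * (Nr n)^2 * ((n:ℝ) - 2) * ((n:ℝ) - 3))) *
              ((M:ℝ) * (Nr n - (M:ℝ)) +
                (((k:ℝ) - 2) / (((n - k : ℕ):ℝ) - 1)) * Nr n * Vdeg G) -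
            lamP n M k|
          ≤ 192 / δ ^ 5 * lamP n M k * x) (by
      intro G _ hV
      refine (sigma_close hn6 hk2n hkn hp (by linarith) (by linarith) hV hxn).trans ?_
      have : 96 ≤ 192 / δ ^ 5 * lamP n M k := by
        calc (96 : ℝ) = 192 / δ ^ 5 * (δ ^ 5 / 2) := by field_simp; norm_num
          _ ≤ _ := by gcongr
      gcongr)
  refine le_trans ?_ hmain
  have hNn : Nr n + 1 ≤ (n : ℝ) ^ 2 := by unfold Nr; nlinarith
  have hE0 : 0 < (n : ℝ) ^ ε := Real.rpow_pos_of_pos hn0 _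
  have e1 : (n : ℝ) ^ ε / 8 ≤ ((n : ℝ) ^ 2 * x) ^ 2 / (2 * (Nr n * B ^ 2)) := by
    rw [le_div_iff₀ (by positivity), hB2]
    have : ((n : ℝ) ^ 2 * x) ^ 2 = (n : ℝ) ^ 3 * ((n : ℝ) ^ ε * (n : ℝ) ^ ε) := by
      rw [← hx2]; ring
    rw [this]
    have h8 : Nr n / 4 ≤ (n : ℝ) ^ 2 := by linarith
    calc (n : ℝ) ^ ε / 8 * (2 * (Nr n * (n * (n : ℝ) ^ ε)))
        = Nr n / 4 * (n * ((n : ℝ) ^ ε * (n : ℝ) ^ ε)) := by ring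
      _ ≤ (n : ℝ) ^ 2 * (n * ((n : ℝ) ^ ε * (n : ℝ) ^ ε)) := by gcongr
      _ = _ := by ring
  have e2 : B ^ 2 / (2 * (4 * n)) = (n : ℝ) ^ ε / 8 := by
    rw [hB2]; field_simp; norm_num
  have hfin : (Nr n + 1) * (2 * Real.exp (-(((n : ℝ) ^ 2 * x) ^ 2 / (2 * (Nr n * B ^ 2)))) +
      Nr n * (2 * Real.exp (-(B ^ 2 / (2 * (4 * n)))))) ≤ Real.exp (-(n : ℝ) ^ (ε / 2)) := by
    rw [e2]
    calc _ ≤ (Nr n + 1) * (2 * Real.exp (-((n : ℝ) ^ ε / 8)) +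
          Nr n * (2 * Real.exp (-((n : ℝ) ^ ε / 8)))) := by gcongr
      _ = 2 * ((Nr n + 1) * (Nr n + 1)) * Real.exp (-((n : ℝ) ^ ε / 8)) := by ring
      _ ≤ 2 * ((n : ℝ) ^ 2 * (n : ℝ) ^ 2) * Real.exp (-((n : ℝ) ^ ε / 8)) := by gcongr
      _ = 2 * (n : ℝ) ^ 4 * Real.exp (-((n : ℝ) ^ ε / 8)) := by ring
      _ ≤ _ := hn₁ n hn1
  linarith
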